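/- Let p be an odd prime, n ≥ 1, and G a subgroup of GL₂(ℤ/pⁿℤ) such that there exists Q ∈ (ℤ/pⁿℤ)² of order pⁿ with g·Q = Q for all g ∈ G. Then H¹_loc(G, (ℤ/pⁿℤ)²) = 0. -/

import Mathlib

open Matrix

/-!
Complete `Q` to a basis `(Q, e)`. Then `g e = b(g) Q + det(g) e`, and every coboundary has the form
`g ↦ t (g e - e)`, so a locally trivial cocycle `Z` comes with a scalar `t_g` for each `g`, and one
scalar has to be found that serves the whole group. Modulo the elements acting trivially, `G` is
generated by an element `σ` whose determinant generates `det G` and an element `τ` of determinant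
one such that `b(τ)` generates `b(ker det)`; it is enough to treat `σ` and `τ`. Since `τ` fixes
`V / Q`, the cocycle is additive on the product `σ τ`, and comparing coordinates in the local
condition at `σ τ` gives a common scalar in each of the cases `b(σ) = 0`, `b(σ τ) = 0` and
`det σ - 1` a unit. If `b(τ)` divides `b(σ)`, multiplying `σ` by a power of `τ` reaches the first
case. Otherwise, unless `det σ - 1` is a unit, `p` divides `det σ - 1`, and as `p` is odd,
`b(σ ^ p ^ a)` is `p ^ a b(σ)` up to a unit, hence for a suitable `a` it equals `b(τ)` up to a unit,
which is the second case for powers of `σ` and `τ`.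
-/

open Module

section Algebra

variable {R : Type*} [CommRing R]

lemma exists_forall_map_eq_zpow {G C : Type*} [Group G] [Group C] [IsCyclic C]
    (φ : G →* C) : ∃ σ, ∀ g, ∃ k : ℤ, φ g = φ σ ^ k := by
  obtain ⟨⟨_, σ, rfl⟩, hσ⟩ := IsCyclic.exists_generator (α := φ.range)
  refine ⟨σ, fun g => ?_⟩
  obtain ⟨k, hk⟩ := hσ ⟨φ g, g, rfl⟩
  exact ⟨k, by simpa using (congrArg Subtype.val hk).symm⟩

lemma associated_geom_sum_of_odd {m : ℕ} (hm : Odd m) (hnil : IsNilpotent (m : R)) {c : R}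
    (hc : (m : R) ∣ c - 1) : Associated (m : R) (∑ i ∈ Finset.range m, c ^ i) := by
  obtain ⟨x, hx⟩ := hc
  obtain ⟨y, hy⟩ := odd_sq_dvd_geom_sum₂_sub (a := (1 : R)) (b := x) hm
  have hunit : IsUnit (1 + (m : R) * y) :=
    ((Commute.all _ y).isNilpotent_mul_right hnil).isUnit_one_add
  refine ⟨hunit.unit, ?_⟩
  simp only [one_pow, mul_one, ← hx, add_sub_cancel] at hy
  rw [IsUnit.unit_spec]
  linear_combination -hy

lemma exists_basis_apply_eq_of_isUnit_repr {ι V : Type*} [Finite ι] [AddCommGroup V] [Module R V]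
    (B : Basis ι R V) {Q : V} {i : ι} (hi : IsUnit (B.repr Q i)) :
    ∃ B' : Basis ι R V, B' i = Q := by
  classical
  have := Fintype.ofFinite ι
  have hdet : B.det (Function.update B i Q) = B.repr Q i := by
    rw [B.det_apply, B.toMatrix_update, B.toMatrix_self, ← Matrix.cramer_apply, Matrix.cramer_one]
    rfl
  obtain ⟨hli, hspan⟩ := (Basis.is_basis_iff_det B).2 (hdet ▸ hi)
  exact ⟨Basis.mk hli hspan.ge, by simp⟩

end Algebra

section PrimePower

variable {p n : ℕ}

lemma natCast_pow_eq_zero_zmod : (p : ZMod (p ^ n)) ^ n = 0 := by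
  rw [← Nat.cast_pow, ZMod.natCast_self]

lemma exists_associated_prime_pow (hp : p.Prime) (r : ZMod (p ^ n)) :
    ∃ k : ℕ, Associated ((p : ZMod (p ^ n)) ^ k) r := by
  have : NeZero (p ^ n) := ⟨pow_ne_zero _ hp.ne_zero⟩
  rcases eq_or_ne r 0 with rfl | hr
  · exact ⟨n, by rw [natCast_pow_eq_zero_zmod]⟩
  obtain ⟨k, m, hm, hval⟩ :=
    Nat.exists_eq_pow_mul_and_not_dvd ((ZMod.val_ne_zero r).2 hr) p hp.ne_one
  have hcop : m.Coprime (p ^ n) := ((hp.coprime_iff_not_dvd.2 hm).symm).pow_right n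
  refine ⟨k, ZMod.unitOfCoprime m hcop, ?_⟩
  rw [ZMod.coe_unitOfCoprime, ← ZMod.natCast_zmod_val r, hval, Nat.cast_mul, Nat.cast_pow]

lemma isUnit_or_prime_dvd (hp : p.Prime) (r : ZMod (p ^ n)) :
    IsUnit r ∨ (p : ZMod (p ^ n)) ∣ r := by
  obtain ⟨k, hk⟩ := exists_associated_prime_pow hp r
  rcases k.eq_zero_or_pos with rfl | hpos
  · exact .inl (by simpa [associated_one_iff_isUnit] using hk.symm)
  · exact .inr ((dvd_pow_self _ hpos.ne').trans hk.dvd)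

lemma dvd_or_exists_associated_prime_pow_mul (hp : p.Prime) (r s : ZMod (p ^ n)) :
    s ∣ r ∨ ∃ a : ℕ, Associated ((p : ZMod (p ^ n)) ^ a * r) s := by
  obtain ⟨k, hk⟩ := exists_associated_prime_pow hp r
  obtain ⟨l, hl⟩ := exists_associated_prime_pow hp s
  rcases le_total l k with hlk | hkl
  · exact .inl (hl.symm.dvd.trans ((pow_dvd_pow _ hlk).trans hk.dvd))
  · refine .inr ⟨l - k, (hk.symm.mul_left _).trans ?_⟩
    rwa [← pow_add, Nat.sub_add_cancel hkl]

lemma exists_isUnit_repr_of_addOrderOf_eq (hp : p.Prime) {ι V : Type*}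
    [AddCommGroup V] [Module (ZMod (p ^ n)) V] (B : Basis ι (ZMod (p ^ n)) V) [Nonempty ι] {Q : V}
    (hQ : addOrderOf Q = p ^ n) : ∃ i, IsUnit (B.repr Q i) := by
  by_contra! hnonunit
  obtain _ | m := n
  · exact hnonunit (Classical.arbitrary ι) (isUnit_of_subsingleton (M := ZMod 1) _)
  have hannihilate : p ^ m • Q = 0 := by
    refine B.repr.injective (Finsupp.ext fun i => ?_)
    obtain ⟨c, hc⟩ := (isUnit_or_prime_dvd hp _).resolve_left (hnonunit i)
    rw [map_nsmul, Finsupp.smul_apply, nsmul_eq_mul, hc, Nat.cast_pow, ← mul_assoc, ← pow_succ,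
      natCast_pow_eq_zero_zmod, zero_mul, map_zero, Finsupp.zero_apply]
  have hdvd := addOrderOf_dvd_of_nsmul_eq_zero hannihilate
  rw [hQ, Nat.pow_dvd_pow_iff_le_right hp.one_lt] at hdvd
  omega

end PrimePower

section Shear

variable {R V : Type*} [CommRing R] [AddCommGroup V] [Module R V] (B : Basis (Fin 2) R V)

/-- The upper right entry of the matrix of `f` in the basis `B`. When `f` fixes `B 0`, its matrix is
`!![1, shear B f; 0, det f]`. -/
noncomputable def shear (f : End R V) : R := B.coord 0 (f (B 1))

variable {B} {f g : End R V}

lemma apply_basis_one (hf : f (B 0) = B 0) :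
    f (B 1) = shear B f • B 0 + LinearMap.det f • B 1 := by
  have hdet : LinearMap.det f = B.repr (f (B 1)) 1 := by
    rw [← LinearMap.det_toMatrix B, Matrix.det_fin_two]
    simp [LinearMap.toMatrix_apply, hf]
  rw [hdet, shear, Basis.coord_apply, ← Fin.sum_univ_two fun i => B.repr (f (B 1)) i • B i,
    B.sum_repr]

lemma apply_sub_self_eq_coord_smul (hf : f (B 0) = B 0) (v : V) :
    f v - v = B.coord 1 v • (shear B f • B 0 + (LinearMap.det f - 1) • B 1) := by
  have hv : v = B.coord 0 v • B 0 + B.coord 1 v • B 1 := by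
    rw [Basis.coord_apply, Basis.coord_apply, ← Fin.sum_univ_two fun i => B.repr v i • B i,
      B.sum_repr]
  nth_rewrite 1 2 [hv]
  rw [map_add, map_smul, map_smul, hf, apply_basis_one hf]
  module

lemma apply_eq_self_of_coord_one_eq_zero (hf : f (B 0) = B 0) {v : V} (hv : B.coord 1 v = 0) :
    f v = v := by
  rw [← sub_eq_zero, apply_sub_self_eq_coord_smul hf, hv, zero_smul]

lemma shear_mul (hf : f (B 0) = B 0) (hg : g (B 0) = B 0) :
    shear B (f * g) = shear B g + LinearMap.det g * shear B f := by
  rw [shear, Module.End.mul_apply, apply_basis_one hg, map_add, map_smul, map_smul, hf]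
  simp [shear]

lemma shear_pow (hf : f (B 0) = B 0) (k : ℕ) :
    shear B (f ^ k) = shear B f * ∑ i ∈ Finset.range k, LinearMap.det f ^ i := by
  induction k with
  | zero => simp [shear]
  | succ k ih =>
    have hfk : (f ^ k) (B 0) = B 0 := by
      rw [Module.End.pow_apply]
      exact Function.iterate_fixed hf k
    rw [pow_succ', shear_mul hf hfk, ih, Finset.sum_range_succ, map_pow]
    ring

lemma eq_one_of_shear_eq_zero (hf : f (B 0) = B 0) (hshear : shear B f = 0)
    (hdet : LinearMap.det f = 1) : f = 1 :=
  LinearMap.ext fun v => sub_eq_zero.1 <| by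
    rw [Module.End.one_apply, apply_sub_self_eq_coord_smul hf, hshear, hdet]
    module

lemma associated_shear_pow_pow {m : ℕ} (hm : Odd m) (hnil : IsNilpotent (m : R))
    (hf : f (B 0) = B 0) (hdet : (m : R) ∣ LinearMap.det f - 1) (a : ℕ) :
    Associated ((m : R) ^ a * shear B f) (shear B (f ^ m ^ a)) := by
  induction a with
  | zero => simp
  | succ a ih =>
    have hfa : (f ^ m ^ a) (B 0) = B 0 := by
      rw [Module.End.pow_apply]
      exact Function.iterate_fixed hf _
    have hdeta : (m : R) ∣ LinearMap.det (f ^ m ^ a) - 1 := by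
      rw [map_pow]
      exact hdet.trans (sub_one_dvd_pow_sub_one _ _)
    rw [pow_succ, mul_right_comm, pow_succ m, pow_mul, shear_pow hfa]
    exact ih.mul_mul (associated_geom_sum_of_odd hm hnil hdeta)

end Shear

section FixedVector

variable {R V G : Type*} [CommRing R] [AddCommGroup V] [Module R V] [Group G]
  {ρ : Representation R G V} {B : Basis (Fin 2) R V}

/-- On the elements of determinant one, `shear` is a homomorphism to the additive group of `R`. -/
noncomputable def shearHom (hfix : ∀ g, ρ g (B 0) = B 0) :
    (LinearMap.det.comp ρ).ker →* Multiplicative R where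
  toFun g := .ofAdd (shear B (ρ g))
  map_one' := by simp [shear]
  map_mul' g h := by
    have hh : LinearMap.det (ρ h) = 1 := h.2
    rw [Subgroup.coe_mul, map_mul, shear_mul (hfix _) (hfix _), hh, one_mul, add_comm, ofAdd_add]

lemma shear_zpow (hfix : ∀ g, ρ g (B 0) = B 0) {τ : G} (hτ : LinearMap.det (ρ τ) = 1) (k : ℤ) :
    shear B (ρ (τ ^ k)) = k * shear B (ρ τ) := by
  have hpow := congrArg Multiplicative.toAdd (map_zpow (shearHom hfix) ⟨τ, hτ⟩ k)
  rwa [toAdd_zpow, zsmul_eq_mul] at hpow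

lemma det_zpow_eq_one {τ : G} (hτ : LinearMap.det (ρ τ) = 1) (k : ℤ) :
    LinearMap.det (ρ (τ ^ k)) = 1 :=
  zpow_mem (K := (LinearMap.det.comp ρ).ker) hτ k

lemma exists_generators_modulo_ker [IsCyclic Rˣ] [IsAddCyclic R]
    (hfix : ∀ g, ρ g (B 0) = B 0) :
    ∃ σ τ : G, LinearMap.det (ρ τ) = 1 ∧
      ∀ H : Subgroup G, ρ.ker ≤ H → σ ∈ H → τ ∈ H → H = ⊤ := by
  obtain ⟨σ, hσ⟩ := exists_forall_map_eq_zpow (LinearMap.det.comp ρ).toHomUnits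
  obtain ⟨⟨τ, hτ⟩, hgen⟩ := exists_forall_map_eq_zpow (shearHom hfix)
  refine ⟨σ, τ, hτ, fun H hker hσH hτH => (Subgroup.eq_top_iff' H).2 fun g => ?_⟩
  obtain ⟨k, hk⟩ := hσ g
  have hdet : g * σ ^ (-k) ∈ (LinearMap.det.comp ρ).ker := by
    rw [MonoidHom.mem_ker, ← MonoidHom.coe_toHomUnits, map_mul, map_zpow, hk, ← _root_.zpow_add,
      add_neg_cancel, zpow_zero, Units.val_one]
  obtain ⟨l, hl⟩ := hgen ⟨_, hdet⟩
  have hshear : shearHom hfix (⟨_, hdet⟩ * ⟨τ, hτ⟩ ^ (-l)) = 1 := by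
    rw [map_mul, map_zpow, hl, ← _root_.zpow_add, add_neg_cancel, zpow_zero]
  have htrivial : g * σ ^ (-k) * τ ^ (-l) ∈ H :=
    hker (eq_one_of_shear_eq_zero (hfix _) (congrArg Multiplicative.toAdd hshear)
      (mul_mem hdet (zpow_mem hτ _)))
  rwa [Subgroup.mul_mem_cancel_right _ (zpow_mem hτH _),
    Subgroup.mul_mem_cancel_right _ (zpow_mem hσH _)] at htrivial

end FixedVector

section Cocycle

variable {R V G : Type*} [CommRing R] [AddCommGroup V] [Module R V] [Group G]
  {ρ : Representation R G V} {Z : G → V}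

/-- `Z` is a `1`-cocycle (crossed homomorphism) on `G` with values in the representation `ρ`. -/
def IsOneCocycle (ρ : Representation R G V) (Z : G → V) : Prop :=
  ∀ g h, Z (g * h) = Z g + ρ g (Z h)

/-- `Z` restricts to a coboundary on every cyclic subgroup: for a cocycle, this says that its class
lies in `H¹_loc`. -/
def SatisfiesLocalConditions (ρ : Representation R G V) (Z : G → V) : Prop :=
  ∀ g, ∃ v, Z g = ρ g v - v

/-- The subgroup on which a cocycle `Z` agrees with the coboundary of `v`. -/
def agreementSubgroup (hZ : IsOneCocycle ρ Z) (v : V) : Subgroup G where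
  carrier := {g | Z g = ρ g v - v}
  one_mem' := by simpa using hZ 1 1
  mul_mem' {g h} hg hh := by
    rw [Set.mem_ofPred_eq] at hg hh ⊢
    rw [hZ, hg, hh, map_mul, Module.End.mul_apply, map_sub]
    abel
  inv_mem' {g} hg := by
    rw [Set.mem_ofPred_eq] at hg ⊢
    have hone : Z 1 = 0 := by simpa using hZ 1 1
    have hinv := hZ g⁻¹ g
    rw [inv_mul_cancel, hone, hg, map_sub, Representation.inv_self_apply] at hinv
    rw [eq_neg_of_add_eq_zero_left hinv.symm, neg_sub]

lemma ker_le_agreementSubgroup (hZ : IsOneCocycle ρ Z)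
    (hloc : SatisfiesLocalConditions ρ Z) (v : V) : ρ.ker ≤ agreementSubgroup hZ v := by
  intro g hg
  obtain ⟨w, hw⟩ := hloc g
  change Z g = ρ g v - v
  rw [hw, MonoidHom.mem_ker.1 hg, Module.End.one_apply, Module.End.one_apply, sub_self, sub_self]

lemma IsOneCocycle.map_zpow (hZ : IsOneCocycle ρ Z) {τ : G} (hτ : ∀ g, ρ g (Z τ) = Z τ) (k : ℤ) :
    Z (τ ^ k) = k • Z τ := by
  have hmul (g : G) : Z (g * τ) = Z g + Z τ := by rw [hZ g τ, hτ]
  induction k with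
  | zero => simpa using hZ 1 1
  | succ k ih => rw [_root_.zpow_add_one, hmul, ih, add_zsmul, one_zsmul]
  | pred k ih =>
    rw [eq_sub_of_add_eq (hmul _).symm, _root_.zpow_sub_one, inv_mul_cancel_right, ih, sub_zsmul,
      one_zsmul, sub_eq_add_neg]

variable {B : Basis (Fin 2) R V} {σ τ : G}

lemma mem_agreementSubgroup_iff_coord (hfix : ∀ g, ρ g (B 0) = B 0)
    {hZ : IsOneCocycle ρ Z} {v : V} {g : G} :
    g ∈ agreementSubgroup hZ v ↔ B.coord 0 (Z g) = B.coord 1 v * shear B (ρ g) ∧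
      B.coord 1 (Z g) = B.coord 1 v * (LinearMap.det (ρ g) - 1) := by
  change Z g = ρ g v - v ↔ _
  rw [apply_sub_self_eq_coord_smul (hfix g), B.ext_elem_iff, Fin.forall_fin_two]
  simp

lemma coord_one_eq_zero_of_det_eq_one (hfix : ∀ g, ρ g (B 0) = B 0)
    (hlocτ : ∃ v, Z τ = ρ τ v - v) (hτ : LinearMap.det (ρ τ) = 1) : B.coord 1 (Z τ) = 0 := by
  obtain ⟨v, hv⟩ := hlocτ
  rw [hv, apply_sub_self_eq_coord_smul (hfix τ), hτ]
  simp

lemma mem_agreementSubgroup_iff_of_det_eq_one (hfix : ∀ g, ρ g (B 0) = B 0)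
    {hZ : IsOneCocycle ρ Z} (hlocτ : ∃ v, Z τ = ρ τ v - v)
    (hτ : LinearMap.det (ρ τ) = 1) {v : V} :
    τ ∈ agreementSubgroup hZ v ↔ B.coord 0 (Z τ) = B.coord 1 v * shear B (ρ τ) := by
  rw [mem_agreementSubgroup_iff_coord hfix, coord_one_eq_zero_of_det_eq_one hfix hlocτ hτ, hτ,
    sub_self, mul_zero, and_iff_left rfl]

lemma mem_agreementSubgroup_of_zpow_mem (hfix : ∀ g, ρ g (B 0) = B 0)
    {hZ : IsOneCocycle ρ Z} (hlocτ : ∃ v, Z τ = ρ τ v - v)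
    (hτ : LinearMap.det (ρ τ) = 1) {v : V} {k : ℤ} (hk : IsUnit (k : R))
    (hmem : τ ^ k ∈ agreementSubgroup hZ v) : τ ∈ agreementSubgroup hZ v := by
  have hinv (g : G) : ρ g (Z τ) = Z τ :=
    apply_eq_self_of_coord_one_eq_zero (hfix g) (coord_one_eq_zero_of_det_eq_one hfix hlocτ hτ)
  rw [mem_agreementSubgroup_iff_coord hfix, hZ.map_zpow hinv, shear_zpow hfix hτ, map_zsmul,
    zsmul_eq_mul] at hmem
  rw [mem_agreementSubgroup_iff_of_det_eq_one hfix hlocτ hτ]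
  exact hk.mul_left_cancel (by linear_combination hmem.1)

lemma exists_coord_eq_of_mul (hfix : ∀ g, ρ g (B 0) = B 0)
    (hZ : IsOneCocycle ρ Z) (hloc : SatisfiesLocalConditions ρ Z)
    (σ : G) (hτ : LinearMap.det (ρ τ) = 1) :
    ∃ v, B.coord 0 (Z σ) + B.coord 0 (Z τ) = B.coord 1 v * (shear B (ρ σ) + shear B (ρ τ)) ∧
      B.coord 1 (Z σ) = B.coord 1 v * (LinearMap.det (ρ σ) - 1) := by
  obtain ⟨v, hv⟩ := hloc (σ * τ)
  have hcoord := coord_one_eq_zero_of_det_eq_one hfix (hloc τ) hτ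
  obtain ⟨hzero, hone⟩ :=
    (mem_agreementSubgroup_iff_coord hfix).1 (show σ * τ ∈ agreementSubgroup hZ v from hv)
  rw [hZ, apply_eq_self_of_coord_one_eq_zero (hfix σ) hcoord, map_add, map_mul] at hzero hone
  rw [shear_mul (hfix σ) (hfix τ), hτ] at hzero
  rw [map_mul, hcoord, hτ] at hone
  exact ⟨v, by linear_combination hzero, by linear_combination hone⟩

lemma exists_mem_agreementSubgroup_of_shear_eq_zero (hfix : ∀ g, ρ g (B 0) = B 0)
    (hZ : IsOneCocycle ρ Z) (hloc : SatisfiesLocalConditions ρ Z)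
    (hτ : LinearMap.det (ρ τ) = 1) (hσ : shear B (ρ σ) = 0) :
    ∃ v, σ ∈ agreementSubgroup hZ v ∧ τ ∈ agreementSubgroup hZ v := by
  obtain ⟨w, hw⟩ := hloc σ
  have hσzero := ((mem_agreementSubgroup_iff_coord hfix (hZ := hZ)).1 hw).1
  rw [hσ, mul_zero] at hσzero
  obtain ⟨v, hzero, hone⟩ := exists_coord_eq_of_mul hfix hZ hloc σ hτ
  rw [hσzero, hσ, zero_add, zero_add] at hzero
  exact ⟨v,
    (mem_agreementSubgroup_iff_coord hfix).2 ⟨by rw [hσzero, hσ, mul_zero], hone⟩,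
    (mem_agreementSubgroup_iff_of_det_eq_one hfix (hloc τ) hτ).2 hzero⟩

lemma mem_agreementSubgroup_of_isUnit_det_sub_one (hfix : ∀ g, ρ g (B 0) = B 0)
    {hZ : IsOneCocycle ρ Z} (hloc : SatisfiesLocalConditions ρ Z)
    (hτ : LinearMap.det (ρ τ) = 1) (hσ : IsUnit (LinearMap.det (ρ σ) - 1)) {v : V}
    (hmem : σ ∈ agreementSubgroup hZ v) : τ ∈ agreementSubgroup hZ v := by
  obtain ⟨w, hzero, hone⟩ := exists_coord_eq_of_mul hfix hZ hloc σ hτ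
  rw [mem_agreementSubgroup_iff_coord hfix] at hmem
  have hvw : B.coord 1 v = B.coord 1 w := hσ.mul_right_cancel (hmem.2.symm.trans hone)
  rw [hmem.1, hvw] at hzero
  rw [mem_agreementSubgroup_iff_of_det_eq_one hfix (hloc τ) hτ, hvw]
  linear_combination hzero

lemma mem_agreementSubgroup_of_shear_add_eq_zero (hfix : ∀ g, ρ g (B 0) = B 0)
    {hZ : IsOneCocycle ρ Z} (hloc : SatisfiesLocalConditions ρ Z)
    (hτ : LinearMap.det (ρ τ) = 1) (hστ : shear B (ρ σ) + shear B (ρ τ) = 0) {v : V}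
    (hmem : σ ∈ agreementSubgroup hZ v) : τ ∈ agreementSubgroup hZ v := by
  obtain ⟨w, hzero, -⟩ := exists_coord_eq_of_mul hfix hZ hloc σ hτ
  rw [hστ, mul_zero, ((mem_agreementSubgroup_iff_coord hfix).1 hmem).1] at hzero
  rw [mem_agreementSubgroup_iff_of_det_eq_one hfix (hloc τ) hτ]
  linear_combination hzero - B.coord 1 v * hστ

lemma exists_mem_agreementSubgroup_of_shear_eq_mul (hfix : ∀ g, ρ g (B 0) = B 0)
    (hZ : IsOneCocycle ρ Z) (hloc : SatisfiesLocalConditions ρ Z)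
    (hτ : LinearMap.det (ρ τ) = 1) {k : ℤ} (hσ : shear B (ρ σ) = k * shear B (ρ τ)) :
    ∃ v, σ ∈ agreementSubgroup hZ v ∧ τ ∈ agreementSubgroup hZ v := by
  have hshear : shear B (ρ (σ * τ ^ (-k))) = 0 := by
    rw [map_mul, shear_mul (hfix _) (hfix _), det_zpow_eq_one hτ, shear_zpow hfix hτ, hσ]
    push_cast
    ring
  obtain ⟨v, hστ, hτv⟩ := exists_mem_agreementSubgroup_of_shear_eq_zero hfix hZ hloc hτ hshear
  exact ⟨v, (Subgroup.mul_mem_cancel_right _ (zpow_mem hτv _)).1 hστ, hτv⟩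

lemma mem_agreementSubgroup_of_shear_eq_isUnit_mul (hfix : ∀ g, ρ g (B 0) = B 0)
    {hZ : IsOneCocycle ρ Z} (hloc : SatisfiesLocalConditions ρ Z)
    (hτ : LinearMap.det (ρ τ) = 1) {k : ℤ} (hk : IsUnit (k : R))
    (hσ : shear B (ρ σ) = k * shear B (ρ τ)) {v : V} (hmem : σ ∈ agreementSubgroup hZ v) :
    τ ∈ agreementSubgroup hZ v := by
  have hcancel : shear B (ρ σ) + shear B (ρ (τ ^ (-k))) = 0 := by
    rw [shear_zpow hfix hτ, hσ]
    push_cast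
    ring
  refine mem_agreementSubgroup_of_zpow_mem hfix (hloc τ) hτ (k := -k) (by simpa using hk) ?_
  exact mem_agreementSubgroup_of_shear_add_eq_zero hfix hloc (det_zpow_eq_one hτ _) hcancel hmem

end Cocycle

section LocalGlobal

variable {p n : ℕ} {V G : Type*} [AddCommGroup V] [Module (ZMod (p ^ n)) V] [Group G]
  {ρ : Representation (ZMod (p ^ n)) G V} {Z : G → V}

lemma exists_common_mem_agreementSubgroup (hp : p.Prime) (hodd : Odd p)
    {B : Basis (Fin 2) (ZMod (p ^ n)) V} (hfix : ∀ g, ρ g (B 0) = B 0)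
    (hZ : IsOneCocycle ρ Z) (hloc : SatisfiesLocalConditions ρ Z)
    (σ : G) {τ : G} (hτ : LinearMap.det (ρ τ) = 1) :
    ∃ v, σ ∈ agreementSubgroup hZ v ∧ τ ∈ agreementSubgroup hZ v := by
  rcases dvd_or_exists_associated_prime_pow_mul hp (shear B (ρ σ)) (shear B (ρ τ)) with
    ⟨c, hc⟩ | ⟨a, ha⟩
  · obtain ⟨k, rfl⟩ := ZMod.intCast_surjective c
    exact exists_mem_agreementSubgroup_of_shear_eq_mul hfix hZ hloc hτ (hc.trans (mul_comm _ _))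
  obtain ⟨v, hv⟩ := hloc σ
  have hσv : σ ∈ agreementSubgroup hZ v := hv
  refine ⟨v, hσv, ?_⟩
  rcases isUnit_or_prime_dvd hp (LinearMap.det (ρ σ) - 1) with hunit | hdvd
  · exact mem_agreementSubgroup_of_isUnit_det_sub_one hfix hloc hτ hunit hσv
  have hpow : Associated (shear B (ρ τ)) (shear B (ρ (σ ^ p ^ a))) := by
    rw [map_pow]
    exact ha.symm.trans
      (associated_shear_pow_pow hodd ⟨n, natCast_pow_eq_zero_zmod⟩ (hfix σ) hdvd a)
  obtain ⟨u, hu⟩ := hpow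
  obtain ⟨k, hk⟩ := ZMod.intCast_surjective (u : ZMod (p ^ n))
  refine mem_agreementSubgroup_of_shear_eq_isUnit_mul hfix hloc hτ (hk ▸ u.isUnit) ?_
    (pow_mem hσv (p ^ a))
  rw [← hu, hk, mul_comm]

lemma exists_eq_coboundary_of_basis_fixed (hp : p.Prime) (hodd : Odd p)
    {B : Basis (Fin 2) (ZMod (p ^ n)) V} (hfix : ∀ g, ρ g (B 0) = B 0)
    (hZ : IsOneCocycle ρ Z) (hloc : SatisfiesLocalConditions ρ Z) :
    ∃ v, ∀ g, Z g = ρ g v - v := by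
  have : IsCyclic (ZMod (p ^ n))ˣ :=
    ZMod.isCyclic_units_of_prime_pow p hp (by rintro rfl; exact absurd hodd (by decide)) n
  obtain ⟨σ, τ, hτ, hgenerate⟩ := exists_generators_modulo_ker hfix
  obtain ⟨v, hσv, hτv⟩ := exists_common_mem_agreementSubgroup hp hodd hfix hZ hloc σ hτ
  have htop := hgenerate _ (ker_le_agreementSubgroup hZ hloc v) hσv hτv
  exact ⟨v, fun g => htop.ge (Subgroup.mem_top g)⟩

theorem statement5_general (hp : p.Prime) (hodd : Odd p) (B : Basis (Fin 2) (ZMod (p ^ n)) V)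
    {Q : V} (hQ : addOrderOf Q = p ^ n) (hfix : ∀ g, ρ g Q = Q)
    (hZ : IsOneCocycle ρ Z) (hloc : SatisfiesLocalConditions ρ Z) :
    ∃ v, ∀ g, Z g = ρ g v - v := by
  obtain ⟨i, hi⟩ := exists_isUnit_repr_of_addOrderOf_eq hp B hQ
  obtain ⟨B', rfl⟩ := exists_basis_apply_eq_of_isUnit_repr B hi
  refine exists_eq_coboundary_of_basis_fixed (B := B'.reindex (Equiv.swap i 0)) hp hodd ?_ hZ hloc
  simpa using hfix

end LocalGlobal

/-- Let `p` be an odd prime, `n ≥ 1`, and `G ≤ GL₂(ℤ/pⁿℤ)` a subgroup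
fixing a vector `Q ∈ (ℤ/pⁿℤ)²` of order `pⁿ`.  Then `H¹_loc(G, (ℤ/pⁿℤ)²) = 0`:
every cocycle on `G` with values in `(ℤ/pⁿℤ)²` satisfying the local conditions is a
coboundary. -/
theorem statement5 (p : ℕ) (hp : p.Prime) (hodd : Odd p) (n : ℕ) (hn : 1 ≤ n)
    (G : Subgroup (GL (Fin 2) (ZMod (p ^ n))))
    (Q : Fin 2 → ZMod (p ^ n)) (hQ : addOrderOf Q = p ^ n)
    (hfix : ∀ g ∈ G, (g : Matrix (Fin 2) (Fin 2) (ZMod (p ^ n))) *ᵥ Q = Q)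
    (Z : G → Fin 2 → ZMod (p ^ n))
    (hZ : ∀ g h : G, Z (g * h) = Z g +
      ((g : GL (Fin 2) (ZMod (p ^ n))) : Matrix (Fin 2) (Fin 2) (ZMod (p ^ n))) *ᵥ Z h)
    (hloc : ∀ g : G, ∃ v : Fin 2 → ZMod (p ^ n),
      Z g = ((g : GL (Fin 2) (ZMod (p ^ n))) : Matrix (Fin 2) (Fin 2) (ZMod (p ^ n))) *ᵥ v - v) :
    ∃ v : Fin 2 → ZMod (p ^ n), ∀ g : G,
      Z g = ((g : GL (Fin 2) (ZMod (p ^ n))) : Matrix (Fin 2) (Fin 2) (ZMod (p ^ n))) *ᵥ v - v := by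
  let ρ : Representation (ZMod (p ^ n)) G (Fin 2 → ZMod (p ^ n)) :=
    (toLinAlgEquiv' : _ ≃ₐ[ZMod (p ^ n)] _).toMonoidHom.comp ((Units.coeHom _).comp G.subtype)
  exact statement5_general (ρ := ρ) hp hodd (Pi.basisFun _ _) hQ (fun g => hfix g g.2) hZ hloc
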